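/- Let N be a nilpotent endomorphism of a finite-dimensional complex vector space H with weight filtration W^N. Then W^N_{−1} = Σ_{i≥0} (Ker(N^{i+1}) ∩ Im(N^{i+1})), the sum of subspaces of H. -/

import Mathlib

namespace Paper

/-! ### Graded quotients -/

/-- The quotient of a subspace `p` by (the trace of) a subspace `q`. -/
abbrev GrQ {M : Type*} [AddCommGroup M] [Module ℂ M] (p q : Submodule ℂ M) :=
  p ⧸ Submodule.comap p.subtype q

/-- The map induced on the quotients `p/q → p'/q'` by a linear map sending `p` into `p'`
and `q` into `q'`. -/
def inducedQuot {M₁ M₂ : Type*} [AddCommGroup M₁] [Module ℂ M₁] [AddCommGroup M₂] [Module ℂ M₂]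
    (f : M₁ →ₗ[ℂ] M₂) (p q : Submodule ℂ M₁) (p' q' : Submodule ℂ M₂)
    (h1 : p ≤ Submodule.comap f p') (h2 : q ≤ Submodule.comap f q') :
    GrQ p q →ₗ[ℂ] GrQ p' q' :=
  Submodule.mapQ _ _ (f.restrict fun x hx => Submodule.mem_comap.mp (h1 hx))
    (by
      intro x hx
      simp only [Submodule.mem_comap, Submodule.subtype_apply] at hx ⊢
      have hfx : f (x : M₁) ∈ q' := Submodule.mem_comap.mp (h2 hx)
      simpa [LinearMap.restrict_apply] using hfx)

variable {H : Type*} [AddCommGroup H] [Module ℂ H]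

/-! ### Weight filtrations -/

/-- `W` is the weight filtration of the nilpotent endomorphism `N`: an increasing filtration,
equal to `0` for small indices and to the whole space for large indices, such that
`N (W i) ⊆ W (i - 2)` and such that for every `i ≥ 0` the map `Gr_i → Gr_{-i}` induced
by `N ^ i` on the graded pieces `Gr_i = W i / W (i-1)` is an isomorphism. -/
structure IsWeightFiltration (N : Module.End ℂ H) (W : ℤ → Submodule ℂ H) : Prop where
  mono : Monotone W
  eventually_bot : ∃ a : ℤ, ∀ i ≤ a, W i = ⊥
  eventually_top : ∃ b : ℤ, ∀ i : ℤ, b ≤ i → W i = ⊤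
  map_le : ∀ i : ℤ, W i ≤ Submodule.comap N (W (i - 2))
  gr_bijective : ∀ i : ℕ,
    ∀ (h1 : W (i : ℤ) ≤ Submodule.comap (N ^ i) (W (-(i : ℤ))))
      (h2 : W ((i : ℤ) - 1) ≤ Submodule.comap (N ^ i) (W (-(i : ℤ) - 1))),
      Function.Bijective
        (inducedQuot (N ^ i) (W (i : ℤ)) (W ((i : ℤ) - 1)) (W (-(i : ℤ))) (W (-(i : ℤ) - 1))
          h1 h2)

/-! The map `N ^ i : Gr_i → Gr_{-i}` being bijective for all `i`, induction on the filtration lifts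
surjectivity to `N ^ i (W i) = W (-i)` and injectivity to `ker (N ^ m) ≤ W (m - 1)`. The second
gives `ker (N ^ a) ⊓ range (N ^ b) ≤ W (a - b - 1)`, hence one inclusion. For the other, given
`x ∈ W (2k - 1)`, the first gives `z ∈ W (2k + 1)` with `N ^ (2k) x = N ^ (2k + 1) z`. Then
`N ^ k x = N ^ k (x - N z) + N ^ (k + 1) z`, where the first summand lies in
`ker (N ^ k) ⊓ range (N ^ k)`. Iterating from `k = 0`, the second summand dies because `N` is
nilpotent. -/

section inducedQuot

variable {M₁ M₂ : Type*} [AddCommGroup M₁] [Module ℂ M₁] [AddCommGroup M₂] [Module ℂ M₂]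
  {f : M₁ →ₗ[ℂ] M₂} {p q : Submodule ℂ M₁} {p' q' : Submodule ℂ M₂}
  {h1 : p ≤ p'.comap f} {h2 : q ≤ q'.comap f}

theorem inducedQuot_mk (x : p) :
    inducedQuot f p q p' q' h1 h2 (Submodule.Quotient.mk x) =
      Submodule.Quotient.mk ⟨f x, h1 x.2⟩ :=
  rfl

theorem inducedQuot_injective_iff :
    Function.Injective (inducedQuot f p q p' q' h1 h2) ↔ p ⊓ q'.comap f ≤ q := by
  rw [injective_iff_map_eq_zero, (Submodule.Quotient.mk_surjective _).forall]
  simp only [inducedQuot_mk, Submodule.Quotient.mk_eq_zero, Submodule.mem_comap,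
    Submodule.subtype_apply, Subtype.forall]
  exact ⟨fun h x hx => h x hx.1 hx.2, fun h x hxp hxq' => h ⟨hxp, hxq'⟩⟩

theorem inducedQuot_surjective_iff :
    Function.Surjective (inducedQuot f p q p' q' h1 h2) ↔ p' ≤ p.map f ⊔ q' := by
  simp only [Function.Surjective, (Submodule.Quotient.mk_surjective _).forall,
    (Submodule.Quotient.mk_surjective _).exists, inducedQuot_mk, Submodule.Quotient.eq,
    Submodule.mem_comap, Submodule.subtype_apply, Subtype.forall, Subtype.exists]
  refine forall₂_congr fun y _ => ?_
  rw [Submodule.mem_sup]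
  constructor
  · rintro ⟨x, hx, hxy⟩
    exact ⟨f x, Submodule.mem_map_of_mem hx, y - f x,
      by simpa using neg_mem hxy, add_sub_cancel _ _⟩
  · rintro ⟨_, ⟨x, hx, rfl⟩, w, hw, rfl⟩
    exact ⟨x, hx, by simpa using hw⟩

end inducedQuot

namespace IsWeightFiltration

variable {N : Module.End ℂ H} {W : ℤ → Submodule ℂ H}

theorem le_comap_pow (hW : IsWeightFiltration N W) (k : ℕ) {i j : ℤ} (hij : i - 2 * k ≤ j) :
    W i ≤ (W j).comap (N ^ k) := by
  induction k generalizing i with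
  | zero => exact hW.mono (by simpa using hij)
  | succ k ih =>
    intro x hx
    rw [Submodule.mem_comap, pow_succ, Module.End.mul_apply]
    exact ih (i := i - 2) (by push_cast at hij; linarith) (hW.map_le i hx)

theorem isNilpotent (hW : IsWeightFiltration N W) : IsNilpotent N := by
  obtain ⟨a, ha⟩ := hW.eventually_bot
  obtain ⟨b, hb⟩ := hW.eventually_top
  refine ⟨(b - a).toNat, LinearMap.ext fun x => ?_⟩
  have hx : x ∈ W (max a b) := hb _ (le_max_right a b) ▸ Submodule.mem_top
  have hNx := hW.le_comap_pow (b - a).toNat (j := a) (by lia) hx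
  rwa [ha a le_rfl] at hNx

theorem inf_comap_pow_le (hW : IsWeightFiltration N W) (i : ℕ) :
    W i ⊓ (W (-i - 1)).comap (N ^ i) ≤ W (i - 1) :=
  inducedQuot_injective_iff.mp <|
    (hW.gr_bijective i (hW.le_comap_pow i (by linarith)) (hW.le_comap_pow i (by linarith))).1

theorem le_map_pow_sup (hW : IsWeightFiltration N W) (i : ℕ) :
    W (-i) ≤ (W i).map (N ^ i) ⊔ W (-i - 1) :=
  inducedQuot_surjective_iff.mp <|
    (hW.gr_bijective i (hW.le_comap_pow i (by linarith)) (hW.le_comap_pow i (by linarith))).2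

theorem map_pow_succ_le (hW : IsWeightFiltration N W) (k : ℕ) (i : ℤ) :
    (W i).map (N ^ (k + 1)) ≤ (W (i - 2)).map (N ^ k) := by
  rw [pow_succ, Module.End.mul_eq_comp, Submodule.map_comp]
  exact Submodule.map_mono (Submodule.map_le_iff_le_comap.mpr (hW.map_le i))

theorem map_pow_eq (hW : IsWeightFiltration N W) (i : ℕ) : (W i).map (N ^ i) = W (-i) := by
  refine le_antisymm (Submodule.map_le_iff_le_comap.mpr (hW.le_comap_pow i (by linarith))) ?_
  obtain ⟨a, ha⟩ := hW.eventually_bot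
  refine Nat.decreasingInduction' (P := fun l : ℕ => W (-l) ≤ (W l).map (N ^ l))
    (fun l _ _ ih => ?_) (Nat.le_add_right i a.natAbs) ?_
  · calc W (-l) ≤ (W l).map (N ^ l) ⊔ W (-l - 1) := hW.le_map_pow_sup l
      _ ≤ (W l).map (N ^ l) ⊔ (W (l + 1)).map (N ^ (l + 1)) := by
        gcongr
        simpa only [Nat.cast_succ, neg_add'] using ih
      _ ≤ (W l).map (N ^ l) := sup_le le_rfl <|
        (hW.map_pow_succ_le l _).trans (Submodule.map_mono (hW.mono (by linarith)))
  · rw [ha _ (by lia)]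
    exact bot_le

theorem ker_pow_le (hW : IsWeightFiltration N W) (m : ℕ) : LinearMap.ker (N ^ m) ≤ W (m - 1) := by
  obtain ⟨b, hb⟩ := hW.eventually_top
  refine Nat.decreasingInduction' (P := fun k : ℕ => LinearMap.ker (N ^ m) ≤ W (k - 1))
    (fun k _ hmk ih => ?_) (Nat.le_add_right m (b.natAbs + 1)) ?_
  · have hker : LinearMap.ker (N ^ m) ≤ (W (-k - 1)).comap (N ^ k) := fun x hx =>
      Submodule.mem_comap.mpr <| by
        rw [Module.End.pow_map_zero_of_le hmk hx]
        exact zero_mem _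
    rw [Nat.cast_succ, add_sub_cancel_right] at ih
    exact (le_inf ih hker).trans (hW.inf_comap_pow_le k)
  · rw [hb _ (by lia)]
    exact le_top

theorem ker_pow_inf_range_pow_le (hW : IsWeightFiltration N W) (a b : ℕ) :
    LinearMap.ker (N ^ a) ⊓ LinearMap.range (N ^ b) ≤ W (a - b - 1) := by
  rintro _ ⟨hx, y, rfl⟩
  have hy : y ∈ LinearMap.ker (N ^ (a + b)) := by
    rwa [LinearMap.mem_ker, pow_add, Module.End.mul_apply]
  exact hW.le_comap_pow b (by push_cast; linarith) (hW.ker_pow_le (a + b) hy)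

theorem map_pow_le_ker_inf_range_sup (hW : IsWeightFiltration N W) (a b : ℕ) :
    (W (a + b - 1)).map (N ^ b) ≤
      LinearMap.ker (N ^ a) ⊓ LinearMap.range (N ^ b) ⊔ (W (a + b + 1)).map (N ^ (b + 1)) := by
  rintro _ ⟨x, hx, rfl⟩
  have hNx : (N ^ (a + b)) x ∈ W (-(a + b + 1 : ℕ)) :=
    hW.le_comap_pow (a + b) (by push_cast; linarith) hx
  rw [← hW.map_pow_eq] at hNx
  obtain ⟨z, hz, hzx⟩ := hNx
  have hker : (N ^ a) ((N ^ b) (x - N z)) = 0 := by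
    rw [← Module.End.mul_apply, ← pow_add, map_sub, ← hzx, pow_succ, Module.End.mul_apply,
      sub_self]
  have hsplit : (N ^ b) x = (N ^ b) (x - N z) + (N ^ (b + 1)) z := by
    rw [pow_succ, Module.End.mul_apply, map_sub, sub_add_cancel]
  rw [hsplit]
  exact Submodule.add_mem_sup ⟨hker, x - N z, rfl⟩
    (Submodule.mem_map_of_mem (by exact_mod_cast hz))

theorem weight_neg_one_le_iSup_sup (hW : IsWeightFiltration N W) (k : ℕ) :
    W (-1) ≤ (⨆ i : ℕ, LinearMap.ker (N ^ i) ⊓ LinearMap.range (N ^ i)) ⊔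
      (W (k + k - 1)).map (N ^ k) := by
  induction k with
  | zero => exact le_sup_of_le_right (by simp [Module.End.one_eq_id])
  | succ k ih =>
    refine ih.trans (sup_le le_sup_left ((hW.map_pow_le_ker_inf_range_sup k k).trans ?_))
    gcongr
    · exact le_iSup (fun i : ℕ => LinearMap.ker (N ^ i) ⊓ LinearMap.range (N ^ i)) k
    · exact hW.mono (by push_cast; linarith)

end IsWeightFiltration

theorem weight_neg_one_eq_iSup_general {N : Module.End ℂ H} {W : ℤ → Submodule ℂ H}
    (hW : IsWeightFiltration N W) :
    W (-1) = ⨆ i : ℕ, LinearMap.ker (N ^ (i + 1)) ⊓ LinearMap.range (N ^ (i + 1)) := by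
  refine le_antisymm ?_ (iSup_le fun i => ?_)
  · obtain ⟨k, hk⟩ := hW.isNilpotent
    calc W (-1) ≤ ⨆ i : ℕ, LinearMap.ker (N ^ i) ⊓ LinearMap.range (N ^ i) := by
          simpa only [hk, Submodule.map_zero, sup_bot_eq] using hW.weight_neg_one_le_iSup_sup k
      _ = ⨆ i : ℕ, LinearMap.ker (N ^ (i + 1)) ⊓ LinearMap.range (N ^ (i + 1)) := by
          rw [← sup_iSup_nat_succ, pow_zero, Module.End.one_eq_id, LinearMap.ker_id, bot_inf_eq,
            bot_sup_eq]
  · simpa only [sub_self, zero_sub] using hW.ker_pow_inf_range_pow_le (i + 1) (i + 1)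

/-- `W^N_{-1} = Σ_{i ≥ 0} (Ker N^{i+1} ∩ Im N^{i+1})`. -/
theorem weight_neg_one_eq_iSup [FiniteDimensional ℂ H]
    {N : Module.End ℂ H} (hN : IsNilpotent N)
    {W : ℤ → Submodule ℂ H} (hW : IsWeightFiltration N W) :
    W (-1) = ⨆ i : ℕ, LinearMap.ker (N ^ (i + 1)) ⊓ LinearMap.range (N ^ (i + 1)) :=
  weight_neg_one_eq_iSup_general hW

end Paper
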